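/- arXiv:2409.20444 — 4 statements merged into one kernel-verified Lean document; each statement's English description precedes it below -/
import Mathlib

section
/- Derivation of the KdV equation at order ε²: let m_e > 0, τ_i ≥ 0 and c > 0 satisfy c²(1 + m_e) = 1 + τ_i, and set κ = (c²m_e − 1)²/(2c(1 + m_e)). Let n¹, n₊², n₋², v₊², v₋², φ² : ℝ × ℝ → ℝ be smooth functions and define v¹ = c·n¹ and φ¹ = (c² − τ_i)·n¹. Suppose that on ℝ × ℝ: (a) ∂_T n¹ + ∂_Y v₊² + ∂_Y(n¹v¹) − c∂_Y n₊² = 0; (b) ∂_T n¹ + ∂_Y v₋² + ∂_Y(n¹v¹) − c∂_Y n₋² = 0; (c) τ_i ∂_Y(n₊² − (1/2)(n¹)²) + ∂_T v¹ + v¹∂_Y v¹ − c∂_Y v₊² + ∂_Y φ² = 0; (d) ∂_Y(n₋² − (1/2)(n¹)²) + m_e(∂_T v¹ + v¹∂_Y v¹ − c∂_Y v₋²) − ∂_Y φ² = 0; (e) ∂_Y²φ¹ + n₊² − n₋² = 0. Then n¹ satisfies the Korteweg–de Vries equation ∂_T n¹ + c·n¹∂_Y n¹ + κ·∂_Y³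 n¹ = 0 on ℝ × ℝ. -/
/-- Partial derivative in the first (spatial) variable `Y` of a curried function. -/
noncomputable def dY (f : ℝ → ℝ → ℝ) : ℝ → ℝ → ℝ :=
  fun Y T => deriv (fun y => f y T) Y

/-- Partial derivative in the second (time) variable `T` of a curried function. -/
noncomputable def dT (f : ℝ → ℝ → ℝ) : ℝ → ℝ → ℝ :=
  fun Y T => deriv (fun s => f Y s) T

theorem kdv_from_second_order_system
    (me τ c : ℝ) (hme : 0 < me) (hτ : 0 ≤ τ) (hc : 0 < c)
    (hsound : c ^ 2 * (1 + me) = 1 + τ)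
    (κ : ℝ) (hκ : κ = (c ^ 2 * me - 1) ^ 2 / (2 * c * (1 + me)))
    (n1 np2 nm2 vp2 vm2 φ2 : ℝ → ℝ → ℝ)
    (hn1 : ContDiff ℝ (⊤ : ℕ∞) (fun p : ℝ × ℝ => n1 p.1 p.2))
    (hnp2 : ContDiff ℝ (⊤ : ℕ∞) (fun p : ℝ × ℝ => np2 p.1 p.2))
    (hnm2 : ContDiff ℝ (⊤ : ℕ∞) (fun p : ℝ × ℝ => nm2 p.1 p.2))
    (hvp2 : ContDiff ℝ (⊤ : ℕ∞) (fun p : ℝ × ℝ => vp2 p.1 p.2))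
    (hvm2 : ContDiff ℝ (⊤ : ℕ∞) (fun p : ℝ × ℝ => vm2 p.1 p.2))
    (hφ2 : ContDiff ℝ (⊤ : ℕ∞) (fun p : ℝ × ℝ => φ2 p.1 p.2))
    (v1 φ1 : ℝ → ℝ → ℝ)
    (hv1 : v1 = fun Y T => c * n1 Y T)
    (hφ1 : φ1 = fun Y T => (c ^ 2 - τ) * n1 Y T)
    (ha : ∀ Y T : ℝ,
      dT n1 Y T + dY vp2 Y T + dY (fun y s => n1 y s * v1 y s) Y T
        - c * dY np2 Y T = 0)
    (hb : ∀ Y T : ℝ,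
      dT n1 Y T + dY vm2 Y T + dY (fun y s => n1 y s * v1 y s) Y T
        - c * dY nm2 Y T = 0)
    (hcc : ∀ Y T : ℝ,
      τ * dY (fun y s => np2 y s - (1 / 2) * (n1 y s) ^ 2) Y T
        + dT v1 Y T + v1 Y T * dY v1 Y T - c * dY vp2 Y T + dY φ2 Y T = 0)
    (hd : ∀ Y T : ℝ,
      dY (fun y s => nm2 y s - (1 / 2) * (n1 y s) ^ 2) Y T
        + me * (dT v1 Y T + v1 Y T * dY v1 Y T - c * dY vm2 Y T)
        - dY φ2 Y T = 0)
    (he : ∀ Y T : ℝ, dY (dY φ1) Y T + np2 Y T - nm2 Y T = 0) :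
    ∀ Y T : ℝ,
      dT n1 Y T + c * n1 Y T * dY n1 Y T + κ * dY (dY (dY n1)) Y T = 0 := by
  intro Y T
  have slice : ∀ f : ℝ → ℝ → ℝ, ContDiff ℝ (⊤ : ℕ∞) (fun p : ℝ × ℝ => f p.1 p.2) →
      DifferentiableAt ℝ (fun y => f y T) Y := by
    intro f hf
    have h1 : Differentiable ℝ (fun p : ℝ × ℝ => f p.1 p.2) := hf.differentiable (by simp)
    have h2 : DifferentiableAt ℝ (fun y : ℝ => ((y, T) : ℝ × ℝ)) Y := by fun_prop
    exact (h1 (Y, T)).comp Y h2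
  have dn := (slice n1 hn1).hasDerivAt
  have dnp := (slice np2 hnp2).hasDerivAt
  have dnm := (slice nm2 hnm2).hasDerivAt
  subst hv1 hφ1
  have e1 : dY (fun y s => n1 y s * (c * n1 y s)) Y T = 2 * c * n1 Y T * dY n1 Y T := by
    refine (dn.mul (dn.const_mul c)).deriv.trans ?_
    simp only [dY]; ring
  have e2 : dY (fun y s => np2 y s - (1 / 2) * (n1 y s) ^ 2) Y T
      = dY np2 Y T - n1 Y T * dY n1 Y T := by
    refine (dnp.sub ((dn.pow 2).const_mul (1 / 2))).deriv.trans ?_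
    simp only [dY]; push_cast; ring
  have e3 : dY (fun y s => nm2 y s - (1 / 2) * (n1 y s) ^ 2) Y T
      = dY nm2 Y T - n1 Y T * dY n1 Y T := by
    refine (dnm.sub ((dn.pow 2).const_mul (1 / 2))).deriv.trans ?_
    simp only [dY]; push_cast; ring
  have hmulY : ∀ (k : ℝ) (f : ℝ → ℝ → ℝ),
      dY (fun y s => k * f y s) = fun y s => k * dY f y s := by
    intro k f
    funext y s
    simp only [dY, deriv_const_mul_field']
  have hmulT : dT (fun y s => c * n1 y s) Y T = c * dT n1 Y T := by
    simp only [dT, deriv_const_mul_field']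
  have e4 : (c ^ 2 - τ) * dY (dY (dY n1)) Y T = dY nm2 Y T - dY np2 Y T := by
    have hfun : (fun y s => (c ^ 2 - τ) * dY (dY n1) y s) = fun y s => nm2 y s - np2 y s := by
      funext y s
      have := he y s
      rw [hmulY, hmulY] at this
      linarith
    have h := congrFun (congrFun (congrArg dY hfun) Y) T
    rw [hmulY] at h
    exact h.trans (dnm.sub dnp).deriv
  have A := ha Y T
  have B := hb Y T
  have C := hcc Y T
  have D := hd Y T
  rw [e1] at A B
  rw [e2, hmulT, hmulY] at C
  rw [e3, hmulT, hmulY] at D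
  have hne : 2 * c * (1 + me) ≠ 0 := by positivity
  have hk : κ * (2 * c * (1 + me)) = (c ^ 2 * me - 1) ^ 2 := by
    rw [hκ]; field_simp
  have hτ' : τ = c ^ 2 * (1 + me) - 1 := by linarith
  subst hτ'
  apply mul_left_cancel₀ hne
  linear_combination c * A + c * me * B + C + D + (1 - c ^ 2 * me) * e4
    + dY (dY (dY n1)) Y T * hk
end

section
/- Second-order relations: let m_e > 0, τ_i ≥ 0 and c > 0 satisfy c²(1 + m_e) = 1 + τ_i, and set κ = (c²m_e − 1)²/(2c(1 + m_e)). Let n¹, n₊², n₋², v₊², v₋², φ² : ℝ × ℝ → ℝ be smooth, define v¹ = c·n¹ and φ¹ = (c² − τ_i)·n¹, and suppose equations (a)–(e) of the order-ε² system hold (as in the KdV derivation): ∂_T n¹ + ∂_Y v₊² + ∂_Y(n¹v¹) − c∂_Y n₊² = 0; ∂_T n¹ + ∂_Y v₋² + ∂_Y(n¹v¹) − c∂_Y n₋² = 0; τ_i ∂_Y(n₊² − (1/2)(n¹)²) + ∂_T v¹ + v¹∂_Y v¹ − c∂_Y v₊² + ∂_Y φ² = 0; ∂_Y(n₋² − (1/2)(n¹)²)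 + m_e(∂_T v¹ + v¹∂_Y v¹ − c∂_Y v₋²) − ∂_Y φ² = 0; ∂_Y²φ¹ + n₊² − n₋² = 0. Assume moreover that n¹ satisfies the KdV equation ∂_T n¹ + c·n¹∂_Y n¹ + κ∂_Y³n¹ = 0, and that for each fixed T the functions Y ↦ v₊²(Y,T), n₊²(Y,T), n¹(Y,T), ∂_Y n¹(Y,T), ∂_Y² n¹(Y,T) all tend to 0 as Y → +∞. Then on ℝ × ℝ: n₋² = n₊² + (c² − τ_i)∂_Y² n¹ and v₊² = c·n₊² + κ·∂_Y² n¹ − (c/2)(n¹)². -/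
open Filter

theorem second_order_relations_EP
    (me τ c : ℝ) (hme : 0 < me) (hτ : 0 ≤ τ) (hc : 0 < c)
    (hsound : c ^ 2 * (1 + me) = 1 + τ)
    (κ : ℝ) (hκ : κ = (c ^ 2 * me - 1) ^ 2 / (2 * c * (1 + me)))
    (n1 np2 nm2 vp2 vm2 φ2 : ℝ → ℝ → ℝ)
    (hn1 : ContDiff ℝ (⊤ : ℕ∞) (fun p : ℝ × ℝ => n1 p.1 p.2))
    (hnp2 : ContDiff ℝ (⊤ : ℕ∞) (fun p : ℝ × ℝ => np2 p.1 p.2))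
    (hnm2 : ContDiff ℝ (⊤ : ℕ∞) (fun p : ℝ × ℝ => nm2 p.1 p.2))
    (hvp2 : ContDiff ℝ (⊤ : ℕ∞) (fun p : ℝ × ℝ => vp2 p.1 p.2))
    (hvm2 : ContDiff ℝ (⊤ : ℕ∞) (fun p : ℝ × ℝ => vm2 p.1 p.2))
    (hφ2 : ContDiff ℝ (⊤ : ℕ∞) (fun p : ℝ × ℝ => φ2 p.1 p.2))
    (v1 φ1 : ℝ → ℝ → ℝ)
    (hv1 : v1 = fun Y T => c * n1 Y T)
    (hφ1 : φ1 = fun Y T => (c ^ 2 - τ) * n1 Y T)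
    (ha : ∀ Y T : ℝ,
      dT n1 Y T + dY vp2 Y T + dY (fun y s => n1 y s * v1 y s) Y T
        - c * dY np2 Y T = 0)
    (hb : ∀ Y T : ℝ,
      dT n1 Y T + dY vm2 Y T + dY (fun y s => n1 y s * v1 y s) Y T
        - c * dY nm2 Y T = 0)
    (hcc : ∀ Y T : ℝ,
      τ * dY (fun y s => np2 y s - (1 / 2) * (n1 y s) ^ 2) Y T
        + dT v1 Y T + v1 Y T * dY v1 Y T - c * dY vp2 Y T + dY φ2 Y T = 0)
    (hd : ∀ Y T : ℝ,
      dY (fun y s => nm2 y s - (1 / 2) * (n1 y s) ^ 2) Y T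
        + me * (dT v1 Y T + v1 Y T * dY v1 Y T - c * dY vm2 Y T)
        - dY φ2 Y T = 0)
    (he : ∀ Y T : ℝ, dY (dY φ1) Y T + np2 Y T - nm2 Y T = 0)
    (hkdv : ∀ Y T : ℝ,
      dT n1 Y T + c * n1 Y T * dY n1 Y T + κ * dY (dY (dY n1)) Y T = 0)
    (hdecay_vp2 : ∀ T : ℝ, Tendsto (fun Y => vp2 Y T) atTop (nhds 0))
    (hdecay_np2 : ∀ T : ℝ, Tendsto (fun Y => np2 Y T) atTop (nhds 0))
    (hdecay_n1 : ∀ T : ℝ, Tendsto (fun Y => n1 Y T) atTop (nhds 0))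
    (hdecay_dn1 : ∀ T : ℝ, Tendsto (fun Y => dY n1 Y T) atTop (nhds 0))
    (hdecay_ddn1 : ∀ T : ℝ, Tendsto (fun Y => dY (dY n1) Y T) atTop (nhds 0)) :
    ∀ Y T : ℝ,
      nm2 Y T = np2 Y T + (c ^ 2 - τ) * dY (dY n1) Y T ∧
      vp2 Y T = c * np2 Y T + κ * dY (dY n1) Y T - (c / 2) * (n1 Y T) ^ 2 := by
  have hsY : ∀ T : ℝ, ContDiff ℝ (⊤ : ℕ∞) (fun y : ℝ => (y, T)) := fun T =>
    contDiff_id.prodMk contDiff_const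
  intro Y T
  have h1 : ContDiff ℝ (⊤ : ℕ∞) (fun y => n1 y T) := hn1.comp (hsY T)
  have hp : ContDiff ℝ (⊤ : ℕ∞) (fun y => np2 y T) := hnp2.comp (hsY T)
  have hv : ContDiff ℝ (⊤ : ℕ∞) (fun y => vp2 y T) := hvp2.comp (hsY T)
  have h2 : ContDiff ℝ (⊤ : ℕ∞) (fun y => dY n1 y T) :=
    (contDiff_infty_iff_deriv.1 h1).2
  have h3 : ContDiff ℝ (⊤ : ℕ∞) (fun y => dY (dY n1) y T) :=
    (contDiff_infty_iff_deriv.1 h2).2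
  have d1 : ∀ y, HasDerivAt (fun y => n1 y T) (dY n1 y T) y := fun y =>
    ((contDiff_infty_iff_deriv.1 h1).1 y).hasDerivAt
  have dp : ∀ y, HasDerivAt (fun y => np2 y T) (dY np2 y T) y := fun y =>
    ((contDiff_infty_iff_deriv.1 hp).1 y).hasDerivAt
  have dv : ∀ y, HasDerivAt (fun y => vp2 y T) (dY vp2 y T) y := fun y =>
    ((contDiff_infty_iff_deriv.1 hv).1 y).hasDerivAt
  have d3 : ∀ y, HasDerivAt (fun y => dY (dY n1) y T) (dY (dY (dY n1)) y T) y := fun y =>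
    ((contDiff_infty_iff_deriv.1 h3).1 y).hasDerivAt
  constructor
  · have e1 : dY φ1 = fun y s => (c ^ 2 - τ) * dY n1 y s := by
      funext y s
      simp only [dY, hφ1, deriv_const_mul_field]
    have e2 : dY (dY φ1) Y T = (c ^ 2 - τ) * dY (dY n1) Y T := by
      rw [e1]
      simp only [dY, deriv_const_mul_field]
    have := he Y T
    rw [e2] at this
    linarith
  · have hG : ∀ y, HasDerivAt
        (fun y => vp2 y T - (c * np2 y T + κ * dY (dY n1) y T - (c / 2) * (n1 y T) ^ 2)) 0 y := by
      intro y
      have hprod : dY (fun y s => n1 y s * v1 y s) y T = 2 * c * n1 y T * dY n1 y T := by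
        have h := ((d1 y).mul ((d1 y).const_mul c)).deriv
        rw [hv1]
        refine Eq.trans h ?_
        ring
      have h := (dv y).sub ((((dp y).const_mul c).add ((d3 y).const_mul κ)).sub
        (((d1 y).pow 2).const_mul (c / 2)))
      have e := ha y T
      rw [hprod] at e
      have k := hkdv y T
      refine h.congr_deriv ?_
      norm_num
      linarith
    have hconst := is_const_of_deriv_eq_zero (fun y => (hG y).differentiableAt)
      (fun y => (hG y).deriv)
    have hlim := (hdecay_vp2 T).sub ((((hdecay_np2 T).const_mul c).add
      ((hdecay_ddn1 T).const_mul κ)).sub (((hdecay_n1 T).pow 2).const_mul (c / 2)))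
    have hlim2 := hlim.congr (fun y => hconst y Y)
    have := tendsto_nhds_unique hlim2 tendsto_const_nhds
    norm_num at this
    linarith
end

section
/- Uniqueness for the linearized KdV equation via energy estimates: let c, κ ∈ ℝ and T* > 0. Let a : ℝ × [0, T*] → ℝ be smooth with a and ∂_Y a bounded on ℝ × [0, T*]. Suppose u : ℝ × [0, T*] → ℝ is smooth, satisfies ∂_T u + c·∂_Y(a·u) + κ·∂_Y³ u = 0 on ℝ × [0, T*] with u(·, 0) ≡ 0, and is such that: for every T ∈ [0, T*] the functions u(·,T), ∂_Y u(·,T), ∂_Y² u(·,T), ∂_Y³ u(·,T), ∂_Y⁴ u(·,T) are square-integrable on ℝ; u(Y,T), ∂_Y u(Y,T), ∂_Y² u(Y,T), ∂_Y³ u(Y,T) → 0 as |Y| → ∞ uniformly in T; and the map T ↦ ∫_ℝ (u(Y,T)² + (∂_Y u(Y,T))²) dY is differentiable with derivative ∫_ℝ (2u·∂_T u + 2∂_Y u·∂_Y ∂_T u) dY. Then u ≡ 0 on ℝ × [0, T*]. -/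
open MeasureTheory Set

lemma fixed_time (c κ C ε R : ℝ) (hR : 0 ≤ R) (f b g : ℝ → ℝ)
    (hf : ContDiff ℝ (⊤ : ℕ∞) f) (hb : ContDiff ℝ (⊤ : ℕ∞) b)
    (hbC : ∀ y, |b y| ≤ C ∧ |deriv b y| ≤ C)
    (hg : ∀ y, g y + c * deriv (fun y => b y * f y) y + κ * deriv (deriv (deriv f)) y = 0)
    (hbd : ∀ y, R ≤ |y| → |f y| < ε ∧ |deriv f y| < ε ∧ |deriv (deriv f) y| < ε) :
    ∫ y in (-R)..R, 2 * f y * g y ≤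
      |c| * C * (∫ y in (-R)..R, f y ^ 2) + 2 * (|c| * C + 3 * |κ|) * ε ^ 2 := by
  have hf1 : ContDiff ℝ (⊤ : ℕ∞) (deriv f) := (contDiff_infty_iff_deriv.1 hf).2
  have hf2 : ContDiff ℝ (⊤ : ℕ∞) (deriv (deriv f)) := (contDiff_infty_iff_deriv.1 hf1).2
  have hf3 : ContDiff ℝ (⊤ : ℕ∞) (deriv (deriv (deriv f))) := (contDiff_infty_iff_deriv.1 hf2).2
  have hb1 : ContDiff ℝ (⊤ : ℕ∞) (deriv b) := (contDiff_infty_iff_deriv.1 hb).2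
  have hasd : ∀ {h : ℝ → ℝ}, ContDiff ℝ (⊤ : ℕ∞) h → ∀ y, HasDerivAt h (deriv h y) y :=
    fun hh y => ((contDiff_infty_iff_deriv.1 hh).1 y).hasDerivAt
  have hg' : ∀ y, g y = -(c * (deriv b y * f y + b y * deriv f y)
      + κ * deriv (deriv (deriv f)) y) := by
    intro y
    have h1 : deriv (fun y => b y * f y) y = deriv b y * f y + b y * deriv f y :=
      ((hasd hb y).mul (hasd hf y)).deriv
    have := hg y
    rw [h1] at this
    linarith
  have hgc : Continuous g := by
    rw [funext hg']
    have := hf.continuous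
    have := hf1.continuous
    have := hf3.continuous
    have := hb.continuous
    have := hb1.continuous
    fun_prop
  have hfc := hf.continuous
  have hb1c := hb1.continuous
  set F : ℝ → ℝ := fun y => -c * (b y * f y ^ 2)
    - κ * (2 * (f y * deriv (deriv f) y) - deriv f y ^ 2) with hF
  have hFd : ∀ y, HasDerivAt F (2 * f y * g y + c * (deriv b y * f y ^ 2)) y := by
    intro y
    have h := (((hasd hb y).mul ((hasd hf y).pow 2)).const_mul (-c)).sub
      (((((hasd hf y).mul (hasd hf2 y)).const_mul 2).sub ((hasd hf1 y).pow 2)).const_mul κ)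
    refine h.congr_deriv ?_
    rw [hg' y]
    simp
    ring
  have hi : ∫ y in (-R)..R, (2 * f y * g y + c * (deriv b y * f y ^ 2)) = F R - F (-R) :=
    intervalIntegral.integral_eq_sub_of_hasDerivAt (fun y _ => hFd y)
      (Continuous.intervalIntegrable (by fun_prop) _ _)
  rw [intervalIntegral.integral_add (Continuous.intervalIntegrable (by fun_prop) _ _)
    (Continuous.intervalIntegrable (by fun_prop) _ _)] at hi
  have hFb : ∀ y, R ≤ |y| → |F y| ≤ (|c| * C + 3 * |κ|) * ε ^ 2 := by
    intro y hy
    obtain ⟨h0, h1, h2⟩ := hbd y hy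
    have hε : 0 ≤ ε := (abs_nonneg _).trans h0.le
    have hC : 0 ≤ C := (abs_nonneg _).trans (hbC y).1
    have e1 : |b y * f y ^ 2| ≤ C * ε ^ 2 := by
      rw [abs_mul, abs_pow]
      gcongr
      exact (hbC y).1
    have e2 : |f y * deriv (deriv f) y| ≤ ε * ε := by
      rw [abs_mul]; gcongr
    have e3 : |deriv f y ^ 2| ≤ ε ^ 2 := by
      rw [abs_pow]; gcongr
    have e4 : |2 * (f y * deriv (deriv f) y) - deriv f y ^ 2| ≤ 3 * ε ^ 2 := by
      rw [abs_le] at *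
      constructor <;> nlinarith
    calc |F y| ≤ |-c * (b y * f y ^ 2)| + |κ * (2 * (f y * deriv (deriv f) y) - deriv f y ^ 2)| :=
          abs_sub _ _
      _ ≤ |c| * (C * ε ^ 2) + |κ| * (3 * ε ^ 2) := by
          rw [abs_mul (-c), abs_mul κ, abs_neg]; gcongr
      _ = _ := by ring
  have hlow : -(|c| * C * (∫ y in (-R)..R, f y ^ 2)) ≤
      ∫ y in (-R)..R, c * (deriv b y * f y ^ 2) := by
    rw [← intervalIntegral.integral_const_mul, ← intervalIntegral.integral_neg]
    apply intervalIntegral.integral_mono_on (by linarith)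
      (Continuous.intervalIntegrable (by fun_prop) _ _)
      (Continuous.intervalIntegrable (by fun_prop) _ _)
    intro y _
    have : |c * (deriv b y * f y ^ 2)| ≤ |c| * C * f y ^ 2 := by
      rw [abs_mul, abs_mul, abs_of_nonneg (sq_nonneg (f y)), ← mul_assoc]
      gcongr
      exact (hbC y).2
    exact (abs_le.1 this).1
  have b1 := abs_le.1 (hFb R (le_abs_self R))
  have b2 := abs_le.1 (hFb (-R) (by rw [abs_neg]; exact le_abs_self R))
  linarith [b1.1, b1.2, b2.1, b2.2]

lemma slice_smooth {Tstar : ℝ} {u : ℝ → ℝ → ℝ}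
    (hu : ContDiffOn ℝ (⊤ : ℕ∞) (fun p : ℝ × ℝ => u p.1 p.2) (univ ×ˢ Icc 0 Tstar))
    {T : ℝ} (hT : T ∈ Icc (0:ℝ) Tstar) : ContDiff ℝ (⊤ : ℕ∞) (fun y => u y T) := by
  rw [← contDiffOn_univ]
  exact hu.comp (f := fun y : ℝ => (y, T)) (by fun_prop) (fun y _ => ⟨mem_univ _, hT⟩)

lemma energy_cont {Tstar : ℝ} (hT : 0 < Tstar) {u : ℝ → ℝ → ℝ}
    (hu : ContDiffOn ℝ (⊤ : ℕ∞) (fun p : ℝ × ℝ => u p.1 p.2) (univ ×ˢ Icc 0 Tstar)) (R : ℝ) :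
    ContinuousOn (fun T => ∫ y in (-R)..R, u y T ^ 2) (Icc 0 Tstar) := by
  have h1 : Continuous (fun p : ℝ × ℝ => u p.2 (projIcc 0 Tstar hT.le p.1) ^ 2) := by
    have : Continuous (fun p : ℝ × ℝ => u p.2 (projIcc 0 Tstar hT.le p.1)) := by
      rw [← continuousOn_univ]
      refine hu.continuousOn.comp
        (f := fun p : ℝ × ℝ => (p.2, ((projIcc 0 Tstar hT.le p.1 : Icc 0 Tstar) : ℝ))) ?_ ?_
      · have := continuous_projIcc (h := hT.le)
        fun_prop
      · intro p _
        exact ⟨mem_univ _, Subtype.coe_prop _⟩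
    exact this.pow 2
  have h2 := intervalIntegral.continuous_parametric_intervalIntegral_of_continuous'
    (μ := volume) (f := fun T y => u y (projIcc 0 Tstar hT.le T) ^ 2) h1 (-R) R
  refine h2.continuousOn.congr ?_
  intro T hT'
  simp only [projIcc_of_mem hT.le hT']

lemma energy_deriv {Tstar : ℝ} {u : ℝ → ℝ → ℝ}
    (hu : ContDiffOn ℝ (⊤ : ℕ∞) (fun p : ℝ × ℝ => u p.1 p.2) (univ ×ˢ Icc 0 Tstar)) (R : ℝ)
    {T : ℝ} (hT : T ∈ Ioo (0:ℝ) Tstar) :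
    HasDerivAt (fun T => ∫ y in (-R)..R, u y T ^ 2)
      (∫ y in (-R)..R, 2 * u y T * dT u y T) T := by
  set U : ℝ × ℝ → ℝ := fun p => u p.1 p.2 with hU
  have hS : IsOpen ((univ : Set ℝ) ×ˢ Ioo 0 Tstar) := isOpen_univ.prod isOpen_Ioo
  have hu' : ContDiffOn ℝ (⊤ : ℕ∞) U (univ ×ˢ Ioo 0 Tstar) :=
    hu.mono (prod_mono_right Ioo_subset_Icc_self)
  have hd : ∀ y, ∀ t ∈ Ioo 0 Tstar, HasDerivAt (fun s => u y s) (fderiv ℝ U (y, t) (0, 1)) t := by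
    intro y t ht
    have h1 : DifferentiableAt ℝ U (y, t) :=
      (hu'.contDiffAt (hS.mem_nhds ⟨mem_univ _, ht⟩)).differentiableAt (by simp)
    exact h1.hasFDerivAt.comp_hasDerivAt t ((hasDerivAt_const t y).prodMk (hasDerivAt_id t))
  have hdT : ∀ y, ∀ t ∈ Ioo 0 Tstar, dT u y t = fderiv ℝ U (y, t) (0, 1) :=
    fun y t ht => (hd y t ht).deriv
  have hcf : ContinuousOn (fun p : ℝ × ℝ => 2 * U p * fderiv ℝ U p (0, 1))
      (univ ×ˢ Ioo 0 Tstar) := by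
    have h1 := hu'.continuousOn_fderiv_of_isOpen hS (by simp)
    have h2 := hu'.continuousOn
    exact (continuousOn_const.mul h2).mul (h1.clm_apply continuousOn_const)
  obtain ⟨r, hr, hrs⟩ := Metric.nhds_basis_closedBall.mem_iff.1 (isOpen_Ioo.mem_nhds hT)
  have hK : IsCompact (uIcc (-R) R ×ˢ Metric.closedBall T r) :=
    isCompact_uIcc.prod (isCompact_closedBall T r)
  obtain ⟨B, hB⟩ := hK.exists_bound_of_continuousOn
    (hcf.mono (prod_mono (subset_univ _) hrs))
  have hsl : ∀ t ∈ Ioo 0 Tstar, Continuous (fun y => u y t) := fun t ht =>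
    (slice_smooth hu (Ioo_subset_Icc_self ht)).continuous
  have hmain := (intervalIntegral.hasDerivAt_integral_of_dominated_loc_of_deriv_le
    (μ := volume) (a := -R) (b := R) (F := fun t y => u y t ^ 2)
    (F' := fun t y => 2 * u y t * fderiv ℝ U (y, t) (0, 1)) (x₀ := T) (bound := fun _ => B)
    (s := Metric.closedBall T r) (Metric.closedBall_mem_nhds T hr) ?_ ?_ ?_ ?_ ?_ ?_).2
  · refine hmain.congr_deriv ?_
    simp only [hdT _ T hT]
  · filter_upwards [isOpen_Ioo.mem_nhds hT] with t ht
    exact ((hsl t ht).pow 2).aestronglyMeasurable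
  · exact ((hsl T hT).pow 2).intervalIntegrable _ _
  · refine Continuous.aestronglyMeasurable ?_
    rw [← continuousOn_univ]
    exact hcf.comp (f := fun y : ℝ => (y, T)) (by fun_prop) (fun y _ => ⟨mem_univ _, hT⟩)
  · refine Filter.Eventually.of_forall fun y hy t ht => ?_
    exact hB (y, t) ⟨uIoc_subset_uIcc hy, ht⟩
  · exact intervalIntegrable_const
  · refine Filter.Eventually.of_forall fun y hy t ht => ?_
    refine ((hd y t (hrs ht)).pow 2).congr_deriv ?_
    simp

theorem linearized_kdv_uniqueness
    (c κ Tstar : ℝ) (hT : 0 < Tstar)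
    (a u : ℝ → ℝ → ℝ)
    (ha_smooth : ContDiffOn ℝ (⊤ : ℕ∞) (fun p : ℝ × ℝ => a p.1 p.2)
      (univ ×ˢ Icc 0 Tstar))
    (ha_bdd : ∃ C : ℝ, ∀ Y : ℝ, ∀ T ∈ Icc (0:ℝ) Tstar,
      |a Y T| ≤ C ∧ |dY a Y T| ≤ C)
    (hu_smooth : ContDiffOn ℝ (⊤ : ℕ∞) (fun p : ℝ × ℝ => u p.1 p.2)
      (univ ×ˢ Icc 0 Tstar))
    (hpde : ∀ Y : ℝ, ∀ T ∈ Icc (0:ℝ) Tstar,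
      dT u Y T + c * dY (fun y s => a y s * u y s) Y T
        + κ * dY (dY (dY u)) Y T = 0)
    (hinit : ∀ Y : ℝ, u Y 0 = 0)
    (hL2 : ∀ T ∈ Icc (0:ℝ) Tstar,
      Integrable (fun Y => (u Y T) ^ 2) ∧
      Integrable (fun Y => (dY u Y T) ^ 2) ∧
      Integrable (fun Y => (dY (dY u) Y T) ^ 2) ∧
      Integrable (fun Y => (dY (dY (dY u)) Y T) ^ 2) ∧
      Integrable (fun Y => (dY (dY (dY (dY u))) Y T) ^ 2))
    (hdecay : ∀ ε > (0:ℝ), ∃ R : ℝ, ∀ Y : ℝ, R ≤ |Y| →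
      ∀ T ∈ Icc (0:ℝ) Tstar,
        |u Y T| < ε ∧ |dY u Y T| < ε ∧ |dY (dY u) Y T| < ε ∧
          |dY (dY (dY u)) Y T| < ε)
    (henergy : ∀ T ∈ Icc (0:ℝ) Tstar,
      HasDerivAt (fun s => ∫ Y : ℝ, ((u Y s) ^ 2 + (dY u Y s) ^ 2))
        (∫ Y : ℝ, (2 * u Y T * dT u Y T + 2 * dY u Y T * dY (dT u) Y T)) T) :
    ∀ Y : ℝ, ∀ T ∈ Icc (0:ℝ) Tstar, u Y T = 0 := by
  obtain ⟨C, hC⟩ := ha_bdd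
  have hC0 : 0 ≤ C := (abs_nonneg _).trans (hC 0 0 ⟨le_rfl, hT.le⟩).1
  set K := |c| * C with hK
  have hK0 : 0 ≤ K := by positivity
  set M := 2 * (|c| * C + 3 * |κ|) with hM
  have hM0 : 0 ≤ M := by positivity
  -- main estimate
  have key : ∀ ε > (0:ℝ), ∀ R0 : ℝ, ∃ R, R0 ≤ R ∧ 0 ≤ R ∧ ∀ T ∈ Icc (0:ℝ) Tstar,
      ∫ y in (-R)..R, u y T ^ 2 ≤ Real.exp (K * T) * (M * ε ^ 2 * T) := by
    intro ε hε R0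
    obtain ⟨R1, hR1⟩ := hdecay ε hε
    refine ⟨max R0 (max R1 0), le_max_left _ _, (le_max_right _ _).trans' (le_max_right _ _), ?_⟩
    set R := max R0 (max R1 0)
    have hR1R : R1 ≤ R := (le_max_right _ _).trans' (le_max_left _ _)
    have hR0 : 0 ≤ R := (le_max_right _ _).trans' (le_max_right _ _)
    set e : ℝ → ℝ := fun T => ∫ y in (-R)..R, u y T ^ 2 with he
    have hder : ∀ t ∈ Ioo 0 Tstar, HasDerivAt (fun t => Real.exp (-(K * t)) * e t - M * ε ^ 2 * t)
        ((Real.exp (-(K * t)) * (-K)) * e t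
          + Real.exp (-(K * t)) * (∫ y in (-R)..R, 2 * u y t * dT u y t) - M * ε ^ 2) t := by
      intro t ht
      have h1 : HasDerivAt (fun t => Real.exp (-(K * t))) (Real.exp (-(K * t)) * (-K)) t := by
        have := ((hasDerivAt_id t).const_mul K).neg.exp
        simpa using this
      have h2 : HasDerivAt (fun t => M * ε ^ 2 * t) (M * ε ^ 2) t := by
        simpa using (hasDerivAt_id t).const_mul (M * ε ^ 2)
      exact (h1.mul (energy_deriv hu_smooth R ht)).sub h2
    have hanti : AntitoneOn (fun t => Real.exp (-(K * t)) * e t - M * ε ^ 2 * t)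
        (Icc 0 Tstar) := by
      apply antitoneOn_of_deriv_nonpos (convex_Icc _ _)
      · have := energy_cont hT hu_smooth R
        exact ((by fun_prop : Continuous fun t => Real.exp (-(K * t))).continuousOn.mul this).sub
          (by fun_prop)
      · rw [interior_Icc]
        exact fun t ht => (hder t ht).differentiableAt.differentiableWithinAt
      · rw [interior_Icc]
        intro t ht
        rw [(hder t ht).deriv]
        have ht' := Ioo_subset_Icc_self ht
        have h := fixed_time c κ C ε R hR0 (fun y => u y t) (fun y => a y t) (fun y => dT u y t)
          (slice_smooth hu_smooth ht') (slice_smooth ha_smooth ht')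
          (fun y => hC y t ht') (fun y => hpde y t ht')
          (fun y hy => by
            obtain ⟨h0, h1, h2, _⟩ := hR1 y (hR1R.trans hy) t ht'
            exact ⟨h0, h1, h2⟩)
        have hexp : Real.exp (-(K * t)) ≤ 1 := by
          rw [Real.exp_le_one_iff]
          have := mul_nonneg hK0 ht.1.le
          linarith
        have hpos := Real.exp_pos (-(K * t))
        have h' : (∫ y in (-R)..R, 2 * u y t * dT u y t) ≤ K * e t + M * ε ^ 2 := h
        have h3 := mul_le_mul_of_nonneg_left h' hpos.le
        have h4 : Real.exp (-(K * t)) * (M * ε ^ 2) ≤ 1 * (M * ε ^ 2) := by gcongr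
        nlinarith
    intro T hT'
    have h := hanti ⟨le_rfl, hT.le⟩ hT' hT'.1
    have he0 : e 0 = 0 := by simp [he, hinit]
    simp only [he0, mul_zero, sub_zero] at h
    have h5 : Real.exp (-(K * T)) * e T ≤ M * ε ^ 2 * T := by linarith
    calc e T = Real.exp (K * T) * (Real.exp (-(K * T)) * e T) := by
          rw [← mul_assoc, ← Real.exp_add]; simp
      _ ≤ _ := by gcongr
  intro Y T hT'
  have hcont : Continuous (fun y => u y T ^ 2) := (slice_smooth hu_smooth hT').continuous.pow 2
  by_contra hne
  set R0 := |Y| + 1 with hR0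
  have hpos : 0 < ∫ y in (-R0)..R0, u y T ^ 2 := by
    apply intervalIntegral.integral_pos (by rw [hR0]; linarith [abs_nonneg Y]) hcont.continuousOn
      (fun y _ => sq_nonneg _)
    exact ⟨Y, ⟨by linarith [neg_abs_le Y], by linarith [le_abs_self Y]⟩, by positivity⟩
  set I := ∫ y in (-R0)..R0, u y T ^ 2 with hI
  have hle : ∀ ε > (0:ℝ), I ≤ Real.exp (K * T) * (M * ε ^ 2 * T) := by
    intro ε hε
    obtain ⟨R, hR, hR', h⟩ := key ε hε R0
    refine le_trans ?_ (h T hT')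
    apply intervalIntegral.integral_mono_interval (by linarith)
      (by rw [hR0]; linarith [abs_nonneg Y]) hR
      (Filter.Eventually.of_forall fun y => sq_nonneg _) (hcont.intervalIntegrable _ _)
  have hlim : Filter.Tendsto (fun ε : ℝ => Real.exp (K * T) * (M * ε ^ 2 * T))
      (nhdsWithin 0 (Ioi 0)) (nhds 0) := by
    have : Continuous (fun ε : ℝ => Real.exp (K * T) * (M * ε ^ 2 * T)) := by fun_prop
    have h := this.tendsto 0
    simp only [ne_eq, OfNat.ofNat_ne_zero, not_false_eq_true, zero_pow, mul_zero, zero_mul] at h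
    exact h.mono_left nhdsWithin_le_nhds
  have := ge_of_tendsto hlim (Filter.eventually_of_mem self_mem_nhdsWithin hle)
  linarith
end

section
/- Density residual identity (Lemma on Res_{n_±}): let m ≥ 1 be an integer, c ∈ ℝ, ε > 0, and let n^{(k)}, v^{(k)} : ℝ × ℝ → ℝ (1 ≤ k ≤ m) be smooth functions satisfying v^{(1)} = c·n^{(1)} and, for all 1 ≤ k ≤ m − 1, the hierarchy equations ∂_T n^{(k)} + ∂_Y v^{(k+1)} + ∂_Y( Σ_{j=1}^{k} n^{(j)} v^{(k+1−j)} ) − c·∂_Y n^{(k+1)} = 0 on ℝ × ℝ. Define N(x,t) = 1 + Σ_{k=1}^{m} ε^k n^{(k)}(ε^{1/2}(x − ct), ε^{3/2}t) and V(x,t) = Σ_{k=1}^{m} ε^k v^{(k)}(ε^{1/2}(x − ct), ε^{3/2}t). Then for all (x,t) ∈ ℝ × ℝ: −ε^{1−m}[ ∂_t N + ∂_x(N·V) ](x,t) = −ε^{5/2}·[ ∂_T n^{(m)} + Σ_{j=1}^{m} Σ_{k=j}^{m} ε^{j−1} ∂_Y( n^{(k)} v^{(m+j−k)} ) ] evaluated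 at (Y,T) = (ε^{1/2}(x − ct), ε^{3/2}t). -/
open Finset

theorem double_sum_split (M : ℕ) (F : ℕ → ℕ → ℝ) :
    ∑ i ∈ Icc 1 (M+1), ∑ j ∈ Icc 1 (M+1), F i j =
      (∑ k ∈ Icc 1 M, ∑ j ∈ Icc 1 k, F j (k + 1 - j)) +
      ∑ j ∈ Icc 1 (M+1), ∑ k ∈ Icc j (M+1), F k (M + 1 + j - k) := by
  rw [← Finset.sum_product', ← Finset.sum_filter_add_sum_filter_not _ (fun p => p.1 + p.2 ≤ M + 1),
    Finset.sum_sigma', Finset.sum_sigma']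
  congr 1
  · refine Finset.sum_bij' (fun p _ => ⟨p.1 + p.2 - 1, p.1⟩) (fun q _ => (q.2, q.1 + 1 - q.2))
      ?_ ?_ ?_ ?_ ?_
    · simp only [mem_filter, mem_product, mem_Icc, mem_sigma]; intros; omega
    · simp only [mem_filter, mem_product, mem_Icc, mem_sigma]; intros; omega
    · simp only [mem_filter, mem_product, mem_Icc]
      rintro ⟨a, b⟩ h
      simp only [Prod.mk.injEq, true_and] at h ⊢; omega
    · simp only [mem_Icc, mem_sigma]
      rintro ⟨a, b⟩ h
      simp only [Sigma.mk.injEq, heq_eq_eq, and_true] at h ⊢; omega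
    · simp only [mem_filter, mem_product, mem_Icc]
      rintro ⟨a, b⟩ h
      simp only at h ⊢; congr 1; omega
  · refine Finset.sum_bij' (fun p _ => ⟨p.1 + p.2 - (M + 1), p.1⟩)
      (fun q _ => (q.2, M + 1 + q.1 - q.2)) ?_ ?_ ?_ ?_ ?_
    · simp only [mem_filter, mem_product, mem_Icc, mem_sigma]; intros; omega
    · simp only [mem_filter, mem_product, mem_Icc, mem_sigma]; intros; omega
    · simp only [mem_filter, mem_product, mem_Icc]
      rintro ⟨a, b⟩ h
      simp only [Prod.mk.injEq, true_and] at h ⊢; omega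
    · simp only [mem_Icc, mem_sigma]
      rintro ⟨a, b⟩ h
      simp only [Sigma.mk.injEq, heq_eq_eq, and_true] at h ⊢; omega
    · simp only [mem_filter, mem_product, mem_Icc]
      rintro ⟨a, b⟩ h
      simp only at h ⊢; congr 1; omega

theorem residual_algebra (M : ℕ) (ε : ℝ) (X D : ℕ → ℝ) (P : ℕ → ℕ → ℝ) (h1 : X 1 = 0)
    (h : ∀ k, 1 ≤ k → k ≤ M → D k + X (k + 1) + ∑ j ∈ Icc 1 k, P j (k + 1 - j) = 0) :
    ∑ k ∈ Icc 1 (M+1), ε ^ k * X k + ∑ k ∈ Icc 1 (M+1), ε ^ (k + 1) * D k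
      + ∑ i ∈ Icc 1 (M+1), ∑ j ∈ Icc 1 (M+1), ε ^ (i + j) * P i j
    = ε ^ (M + 2) * (D (M + 1) + ∑ j ∈ Icc 1 (M+1), ∑ k ∈ Icc j (M+1),
        ε ^ (j - 1) * P k (M + 1 + j - k)) := by
  have e1 : ∑ k ∈ Icc 1 (M+1), ε ^ k * X k = ∑ k ∈ Icc 1 M, ε ^ (k + 1) * X (k + 1) := by
    clear h
    induction M with
    | zero => simp [h1]
    | succ M ih => rw [Finset.sum_Icc_succ_top (by omega), ih, Finset.sum_Icc_succ_top (by omega)]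
  have e2 : ∑ k ∈ Icc 1 M, ∑ j ∈ Icc 1 k, ε ^ (j + (k + 1 - j)) * P j (k + 1 - j)
      = ∑ k ∈ Icc 1 M, ε ^ (k + 1) * ∑ j ∈ Icc 1 k, P j (k + 1 - j) := by
    refine Finset.sum_congr rfl fun k _ => ?_
    rw [Finset.mul_sum]
    refine Finset.sum_congr rfl fun j hj => ?_
    rw [mem_Icc] at hj
    congr 2; omega
  have e3 : ∑ j ∈ Icc 1 (M+1), ∑ k ∈ Icc j (M+1), ε ^ (k + (M + 1 + j - k)) * P k (M + 1 + j - k)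
      = ε ^ (M + 2) * ∑ j ∈ Icc 1 (M+1), ∑ k ∈ Icc j (M+1), ε ^ (j - 1) * P k (M + 1 + j - k) := by
    rw [Finset.mul_sum]
    refine Finset.sum_congr rfl fun j hj => ?_
    rw [Finset.mul_sum]
    refine Finset.sum_congr rfl fun k hk => ?_
    rw [mem_Icc] at hj hk
    rw [← mul_assoc, ← pow_add]
    congr 2; omega
  have e4 : ∑ k ∈ Icc 1 M, ε ^ (k + 1) * X (k + 1) + ∑ k ∈ Icc 1 M, ε ^ (k + 1) * D k
      + ∑ k ∈ Icc 1 M, ε ^ (k + 1) * ∑ j ∈ Icc 1 k, P j (k + 1 - j) = 0 := by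
    rw [← Finset.sum_add_distrib, ← Finset.sum_add_distrib]
    refine Finset.sum_eq_zero fun k hk => ?_
    rw [mem_Icc] at hk
    linear_combination ε ^ (k + 1) * h k hk.1 hk.2
  rw [double_sum_split, e1, e2, e3, Finset.sum_Icc_succ_top (by omega)]
  linear_combination e4

theorem hasDerivAt_fst {f : ℝ → ℝ → ℝ} (hf : ContDiff ℝ (⊤ : ℕ∞) (fun p : ℝ × ℝ => f p.1 p.2))
    (Y T : ℝ) : HasDerivAt (fun y => f y T) (dY f Y T) Y := by
  have h : Differentiable ℝ (fun p : ℝ × ℝ => f p.1 p.2) := hf.differentiable (by simp)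
  have h2 : Differentiable ℝ (fun y => f y T) :=
    h.comp (f := fun y : ℝ => (y, T)) (by fun_prop)
  exact (h2 Y).hasDerivAt

theorem hasDerivAt_chain {f : ℝ → ℝ → ℝ}
    (hf : ContDiff ℝ (⊤ : ℕ∞) (fun p : ℝ × ℝ => f p.1 p.2)) {a b : ℝ → ℝ} {da db t : ℝ}
    (ha : HasDerivAt a da t) (hb : HasDerivAt b db t) :
    HasDerivAt (fun s => f (a s) (b s)) (da * dY f (a t) (b t) + db * dT f (a t) (b t)) t := by
  have h : Differentiable ℝ (fun p : ℝ × ℝ => f p.1 p.2) := hf.differentiable (by simp)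
  have hF := (h (a t, b t)).hasFDerivAt
  set L := fderiv ℝ (fun p : ℝ × ℝ => f p.1 p.2) (a t, b t) with hL
  have h1 : dY f (a t) (b t) = L (1, 0) := by
    have := HasFDerivAt.comp_hasDerivAt (f := fun y : ℝ => (y, b t)) (a t) hF
      ((hasDerivAt_id (a t)).prodMk (hasDerivAt_const (a t) (b t)))
    exact this.deriv
  have h2 : dT f (a t) (b t) = L (0, 1) := by
    have := HasFDerivAt.comp_hasDerivAt (f := fun y : ℝ => (a t, y)) (b t) hF
      ((hasDerivAt_const (b t) (a t)).prodMk (hasDerivAt_id (b t)))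
    exact this.deriv
  have h3 := HasFDerivAt.comp_hasDerivAt (f := fun s : ℝ => (a s, b s)) t hF (ha.prodMk hb)
  have h4 : L (da, db) = da * dY f (a t) (b t) + db * dT f (a t) (b t) := by
    rw [h1, h2, ← smul_eq_mul, ← smul_eq_mul, ← map_smul, ← map_smul, ← map_add]
    simp
  rw [← h4]
  exact h3

theorem density_residual_identity
    (m : ℕ) (hm : 1 ≤ m) (c : ℝ) (ε : ℝ) (hε : 0 < ε)
    (n v : ℕ → ℝ → ℝ → ℝ)
    (hsmooth : ∀ k, 1 ≤ k → k ≤ m →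
      ContDiff ℝ (⊤ : ℕ∞) (fun p : ℝ × ℝ => n k p.1 p.2) ∧
      ContDiff ℝ (⊤ : ℕ∞) (fun p : ℝ × ℝ => v k p.1 p.2))
    (hv1 : ∀ Y T : ℝ, v 1 Y T = c * n 1 Y T)
    (hhier : ∀ k, 1 ≤ k → k ≤ m - 1 → ∀ Y T : ℝ,
      dT (n k) Y T + dY (v (k + 1)) Y T
        + dY (fun y s => ∑ j ∈ Icc 1 k, n j y s * v (k + 1 - j) y s) Y T
        - c * dY (n (k + 1)) Y T = 0)
    (N V : ℝ → ℝ → ℝ)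
    (hN : N = fun x t => 1 + ∑ k ∈ Icc 1 m,
      ε ^ k * n k (Real.sqrt ε * (x - c * t)) (ε ^ ((3:ℝ)/2) * t))
    (hV : V = fun x t => ∑ k ∈ Icc 1 m,
      ε ^ k * v k (Real.sqrt ε * (x - c * t)) (ε ^ ((3:ℝ)/2) * t)) :
    ∀ x t : ℝ,
      -ε ^ ((1:ℝ) - m) *
          (deriv (fun s => N x s) t + deriv (fun y => N y t * V y t) x) =
        -ε ^ ((5:ℝ)/2) *
          (dT (n m) (Real.sqrt ε * (x - c * t)) (ε ^ ((3:ℝ)/2) * t)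
            + ∑ j ∈ Icc 1 m, ∑ k ∈ Icc j m,
              ε ^ (j - 1) *
                dY (fun y s => n k y s * v (m + j - k) y s)
                  (Real.sqrt ε * (x - c * t)) (ε ^ ((3:ℝ)/2) * t)) := by
  intro x t
  obtain ⟨M, rfl⟩ : ∃ M, m = M + 1 := ⟨m - 1, by omega⟩
  simp only [Nat.add_sub_cancel] at hhier
  set Y := Real.sqrt ε * (x - c * t) with hY
  set T := ε ^ ((3:ℝ)/2) * t with hT
  have hP : ∀ i j, i ∈ Icc 1 (M+1) → j ∈ Icc 1 (M+1) →
      dY (fun y s => n i y s * v j y s) Y T = dY (n i) Y T * v j Y T + n i Y T * dY (v j) Y T := by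
    intro i j hi hj
    rw [mem_Icc] at hi hj
    exact ((hasDerivAt_fst (hsmooth i hi.1 hi.2).1 Y T).mul
      (hasDerivAt_fst (hsmooth j hj.1 hj.2).2 Y T)).deriv
  have hh : ∀ k, 1 ≤ k → k ≤ M → dT (n k) Y T + (dY (v (k + 1)) Y T - c * dY (n (k + 1)) Y T)
      + ∑ j ∈ Icc 1 k, dY (fun y s => n j y s * v (k + 1 - j) y s) Y T = 0 := by
    intro k hk1 hk2
    rw [← hhier k hk1 hk2 Y T]
    have : dY (fun y s => ∑ j ∈ Icc 1 k, n j y s * v (k + 1 - j) y s) Y T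
        = ∑ j ∈ Icc 1 k, dY (fun y s => n j y s * v (k + 1 - j) y s) Y T := by
      refine (HasDerivAt.fun_sum fun j hj => ?_).deriv
      rw [mem_Icc] at hj
      rw [hP _ _ (by rw [mem_Icc]; omega) (by rw [mem_Icc]; omega)]
      exact (hasDerivAt_fst (hsmooth j (by omega) (by omega)).1 Y T).mul
        (hasDerivAt_fst (hsmooth (k + 1 - j) (by omega) (by omega)).2 Y T)
    rw [this]; ring
  have hX1 : dY (v 1) Y T - c * dY (n 1) Y T = 0 := by
    have h := (hasDerivAt_fst (hsmooth 1 (by omega) (by omega)).1 Y T).const_mul c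
    have : dY (v 1) Y T = c * dY (n 1) Y T := by
      rw [← h.deriv]; simp only [dY, hv1]
    rw [this, sub_self]
  have key := residual_algebra M ε (fun k => dY (v k) Y T - c * dY (n k) Y T)
    (fun k => dT (n k) Y T) (fun i j => dY (fun y s => n i y s * v j y s) Y T) hX1 hh
  have hNt : HasDerivAt (fun s => N x s) (∑ k ∈ Icc 1 (M+1), ε ^ k *
      ((Real.sqrt ε * (-c)) * dY (n k) Y T + ε ^ ((3:ℝ)/2) * dT (n k) Y T)) t := by
    rw [hN]
    refine HasDerivAt.const_add _ (HasDerivAt.fun_sum fun k hk => HasDerivAt.const_mul _ ?_)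
    rw [mem_Icc] at hk
    refine hasDerivAt_chain (hsmooth k hk.1 hk.2).1 (a := fun s => Real.sqrt ε * (x - c * s))
      (b := fun s => ε ^ ((3:ℝ)/2) * s) ?_ ?_
    · simpa using (((hasDerivAt_id t).const_mul c).const_sub x).const_mul (Real.sqrt ε)
    · simpa using (hasDerivAt_id t).const_mul (ε ^ ((3:ℝ)/2))
  have hax : HasDerivAt (fun y => Real.sqrt ε * (y - c * t)) (Real.sqrt ε) x := by
    simpa using ((hasDerivAt_id x).sub_const (c * t)).const_mul (Real.sqrt ε)
  have hNx : HasDerivAt (fun y => N y t) (∑ k ∈ Icc 1 (M+1), ε ^ k *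
      (Real.sqrt ε * dY (n k) Y T + 0 * dT (n k) Y T)) x := by
    rw [hN]
    refine HasDerivAt.const_add _ (HasDerivAt.fun_sum fun k hk => HasDerivAt.const_mul _ ?_)
    rw [mem_Icc] at hk
    exact hasDerivAt_chain (hsmooth k hk.1 hk.2).1 hax (hasDerivAt_const x T)
  have hVx : HasDerivAt (fun y => V y t) (∑ k ∈ Icc 1 (M+1), ε ^ k *
      (Real.sqrt ε * dY (v k) Y T + 0 * dT (v k) Y T)) x := by
    rw [hV]
    refine HasDerivAt.fun_sum fun k hk => HasDerivAt.const_mul _ ?_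
    rw [mem_Icc] at hk
    exact hasDerivAt_chain (hsmooth k hk.1 hk.2).2 hax (hasDerivAt_const x T)
  have hNV : N x t = 1 + ∑ k ∈ Icc 1 (M+1), ε ^ k * n k Y T := by rw [hN]
  have hVV : V x t = ∑ k ∈ Icc 1 (M+1), ε ^ k * v k Y T := by rw [hV]
  have h32 : ε ^ ((3:ℝ)/2) = Real.sqrt ε * ε := by
    rw [Real.sqrt_eq_rpow]
    nth_rewrite 3 [← Real.rpow_one ε]
    rw [← Real.rpow_add hε]; norm_num
  have hpow : ε ^ ((1:ℝ) - (M + 1 : ℕ)) * (Real.sqrt ε * ε ^ (M + 2)) = ε ^ ((5:ℝ)/2) := by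
    rw [Real.sqrt_eq_rpow, ← Real.rpow_natCast, ← Real.rpow_add hε, ← Real.rpow_add hε]
    congr 1; push_cast; ring
  have hdouble : ∑ i ∈ Icc 1 (M+1), ∑ j ∈ Icc 1 (M+1),
      ε ^ (i + j) * dY (fun y s => n i y s * v j y s) Y T
      = (∑ k ∈ Icc 1 (M+1), ε ^ k * dY (n k) Y T) * (∑ k ∈ Icc 1 (M+1), ε ^ k * v k Y T)
      + (∑ k ∈ Icc 1 (M+1), ε ^ k * n k Y T) * (∑ k ∈ Icc 1 (M+1), ε ^ k * dY (v k) Y T) := by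
    rw [Finset.sum_mul_sum, Finset.sum_mul_sum, ← Finset.sum_add_distrib]
    refine Finset.sum_congr rfl fun i hi => ?_
    rw [← Finset.sum_add_distrib]
    refine Finset.sum_congr rfl fun j hj => ?_
    rw [hP i j hi hj]; ring
  have s1 : ∑ k ∈ Icc 1 (M+1), ε ^ k * (Real.sqrt ε * dY (n k) Y T + 0 * dT (n k) Y T)
      = Real.sqrt ε * ∑ k ∈ Icc 1 (M+1), ε ^ k * dY (n k) Y T := by
    rw [Finset.mul_sum]; exact Finset.sum_congr rfl fun k _ => by ring
  have s2 : ∑ k ∈ Icc 1 (M+1), ε ^ k * (Real.sqrt ε * dY (v k) Y T + 0 * dT (v k) Y T)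
      = Real.sqrt ε * ∑ k ∈ Icc 1 (M+1), ε ^ k * dY (v k) Y T := by
    rw [Finset.mul_sum]; exact Finset.sum_congr rfl fun k _ => by ring
  have s3 : ∑ k ∈ Icc 1 (M+1), ε ^ k *
      ((Real.sqrt ε * (-c)) * dY (n k) Y T + ε ^ ((3:ℝ)/2) * dT (n k) Y T)
      = Real.sqrt ε * (∑ k ∈ Icc 1 (M+1), ε ^ (k + 1) * dT (n k) Y T
        - c * ∑ k ∈ Icc 1 (M+1), ε ^ k * dY (n k) Y T) := by
    rw [h32, Finset.mul_sum, ← Finset.sum_sub_distrib, Finset.mul_sum]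
    exact Finset.sum_congr rfl fun k _ => by ring
  have s4 : ∑ k ∈ Icc 1 (M+1), ε ^ k * (dY (v k) Y T - c * dY (n k) Y T)
      = ∑ k ∈ Icc 1 (M+1), ε ^ k * dY (v k) Y T
        - c * ∑ k ∈ Icc 1 (M+1), ε ^ k * dY (n k) Y T := by
    rw [Finset.mul_sum, ← Finset.sum_sub_distrib]
    exact Finset.sum_congr rfl fun k _ => by ring
  have hprod := (hNx.mul hVx).deriv
  have hprodx : deriv (fun y => N y t * V y t) x = _ := hprod
  rw [hprodx, hNt.deriv, hNV, hVV, s1, s2, s3, ← hpow]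
  rw [s4, hdouble] at key
  linear_combination (-ε ^ ((1:ℝ) - (M + 1 : ℕ)) * Real.sqrt ε) * key
end
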